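/- Let q_0(ξ) be a continuous nonvanishing function of ξ_n ∈ ℝ (for fixed ξ') of the form q_0 = e^ψ with ψ(ξ_n) ∈ H_{-1} (Fourier transform of an integrable function with one-sided decompositions), and write ψ = ψ_+ + ψ_- with ψ_± = h^± ψ, where F^{-1}ψ_+ is supported in [0,∞) and F^{-1}ψ_- in (-∞,0]. Set q_0^+ = e^{ψ_+}. Then the plus-integral of h^+ q_0^+ equals lim_{z_n→0+} F^{-1}_{ξ_n→z_n} ψ, i.e. (1/2π)∫^+ h^+ q_0^+ dξ_n = lim_{z_n→0+} [F^{-1} ψ](z_n) = lim_{z_n→0+}[F^{-1} log q_0](z_n). -/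

import Mathlib

open MeasureTheory

/-!
Put `F = 𝓕 f₊`. Since `exp F - 1 = F + φ(F) F`, where `φ(z) = ∑ n, z ^ (n + 1) / (n + 2)!` is
entire and vanishes at `0`, the function `exp F - 1` is the Fourier transform of `f₊ + h ⋆ f₊`,
where `h` is the power series `φ` of `f₊` in the convolution algebra `L¹`. By uniqueness of the
Fourier transform `g = f₊ + h ⋆ f₊` almost everywhere. As `h` is integrable and both factors live
on `[0, ∞)`, the value of `h ⋆ f₊` at a small `x > 0` only sees `h` on `[0, x]` and the bounded
values of `f₊` near `0⁺`, so it tends to `0`.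
-/

open Filter Function Set

open scoped Asymptotics Convolution ContDiff FourierTransform Nat Topology

section ConvolutionPowers

variable {G : Type*} [MeasurableSpace G] {μ : Measure G}

theorem integral_norm_convolution_le {𝕜 E E' F : Type*} [NontriviallyNormedField 𝕜]
    [NormedAddCommGroup E] [NormedSpace 𝕜 E] [NormedAddCommGroup E'] [NormedSpace 𝕜 E']
    [NormedAddCommGroup F] [NormedSpace 𝕜 F] [NormedSpace ℝ F]
    [AddGroup G] [MeasurableAdd₂ G] [MeasurableNeg G] [SFinite μ] [μ.IsAddRightInvariant]
    (L : E →L[𝕜] E' →L[𝕜] F) {f : G → E} {g : G → E'} (hf : Integrable f μ) (hg : Integrable g μ) :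
    ∫ x, ‖(f ⋆[L, μ] g) x‖ ∂μ ≤ ‖L‖ * ((∫ x, ‖f x‖ ∂μ) * ∫ x, ‖g x‖ ∂μ) := by
  let B : ℝ →L[ℝ] ℝ →L[ℝ] ℝ := ContinuousLinearMap.mul ℝ ℝ
  have hconv : Integrable ((‖f ·‖) ⋆[B, μ] (‖g ·‖)) μ := hf.norm.integrable_convolution B hg.norm
  have hpointwise : ∀ᵐ x ∂μ, ‖(f ⋆[L, μ] g) x‖ ≤ ‖L‖ * ((‖f ·‖) ⋆[B, μ] (‖g ·‖)) x := by
    filter_upwards [hf.norm.ae_convolution_exists B hg.norm] with x hx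
    rw [convolution_def, convolution_def, ← integral_const_mul]
    refine norm_integral_le_of_norm_le (hx.integrable.const_mul ‖L‖) (ae_of_all _ fun t ↦ ?_)
    exact (L.le_opNorm₂ _ _).trans_eq (mul_assoc _ _ _)
  calc ∫ x, ‖(f ⋆[L, μ] g) x‖ ∂μ
      ≤ ∫ x, ‖L‖ * ((‖f ·‖) ⋆[B, μ] (‖g ·‖)) x ∂μ :=
        integral_mono_of_nonneg (ae_of_all _ fun _ ↦ norm_nonneg _) (hconv.const_mul _) hpointwise
    _ = ‖L‖ * ((∫ x, ‖f x‖ ∂μ) * ∫ x, ‖g x‖ ∂μ) := by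
        rw [integral_const_mul, integral_convolution B hf.norm hg.norm]
        rfl

theorem integrable_tsum_of_summable_integral_norm {α ι E : Type*} [MeasurableSpace α]
    {μ : Measure α} [Countable ι] [NormedAddCommGroup E] [CompleteSpace E] {F : ι → α → E}
    (hF : ∀ i, Integrable (F i) μ) (hsum : Summable fun i ↦ ∫ a, ‖F i a‖ ∂μ) :
    Integrable (fun a ↦ ∑' i, F i a) μ := by
  have hfinite : ∑' i, ‖(hF i).toL1 (F i)‖ₑ ≠ ⊤ := by
    rw [tsum_enorm_ne_top_iff_summable_norm]
    simpa only [L1.norm_of_fun_eq_integral_norm] using hsum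
  refine (L1.integrable_coeFn (∑' i, (hF i).toL1 (F i))).congr ?_
  filter_upwards [Lp.coeFn_tsum hfinite, ae_all_iff.2 fun i ↦ (hF i).coeFn_toL1] with a hsum_a ha
  simp only [hsum_a, ha]

variable {A : Type*} [NormedRing A] [NormedAlgebra ℂ A]

/-- The convolution power `f ⋆ ⋯ ⋆ f` with `n + 1` factors; the index is shifted because the
convolution algebra of integrable functions has no unit. -/
noncomputable def convPow [Sub G] (μ : Measure G) (f : G → A) : ℕ → G → A
  | 0 => f
  | n + 1 => f ⋆[ContinuousLinearMap.mul ℂ A, μ] convPow μ f n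

theorem support_convPow_subset [AddCommGroup G] {f : G → A} {S : AddSubsemigroup G}
    (hf : support f ⊆ S) (n : ℕ) : support (convPow μ f n) ⊆ S := by
  induction n with
  | zero => exact hf
  | succ n ih =>
    refine (support_convolution_subset _).trans (add_subset_iff.2 fun x hx y hy ↦ ?_)
    exact S.add_mem (hf hx) (ih hy)

/-- The power series `∑ n, c n • z ^ (n + 1)` evaluated at `f` in the convolution algebra. -/
noncomputable def convSeries [Sub G] (μ : Measure G) (c : ℕ → ℂ) (f : G → A) (x : G) : A :=
  ∑' n, c n • convPow μ f n x

theorem support_convSeries_subset [AddCommGroup G] {c : ℕ → ℂ} {f : G → A} {S : AddSubsemigroup G}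
    (hf : support f ⊆ S) : support (convSeries μ c f) ⊆ S := by
  refine support_subset_iff'.2 fun x hx ↦ ?_
  have hterm (n : ℕ) : convPow μ f n x = 0 :=
    support_subset_iff'.1 (support_convPow_subset hf n) x hx
  simp [convSeries, hterm]

variable [AddGroup G] [MeasurableAdd₂ G] [MeasurableNeg G] [SFinite μ] [μ.IsAddRightInvariant]
  {c : ℕ → ℂ} {f : G → A}

theorem integrable_convPow (hf : Integrable f μ) (n : ℕ) : Integrable (convPow μ f n) μ := by
  induction n with
  | zero => exact hf
  | succ n ih => exact hf.integrable_convolution _ ih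

theorem integral_norm_convPow_le (hf : Integrable f μ) (n : ℕ) :
    ∫ x, ‖convPow μ f n x‖ ∂μ ≤ (∫ x, ‖f x‖ ∂μ) ^ (n + 1) := by
  induction n with
  | zero => simp [convPow]
  | succ n ih =>
    calc ∫ x, ‖convPow μ f (n + 1) x‖ ∂μ
        ≤ ‖ContinuousLinearMap.mul ℂ A‖ * ((∫ x, ‖f x‖ ∂μ) * ∫ x, ‖convPow μ f n x‖ ∂μ) :=
          integral_norm_convolution_le _ hf (integrable_convPow hf n)
      _ ≤ 1 * ((∫ x, ‖f x‖ ∂μ) * (∫ x, ‖f x‖ ∂μ) ^ (n + 1)) := by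
          gcongr
          exact ContinuousLinearMap.opNorm_mul_le ℂ A
      _ = (∫ x, ‖f x‖ ∂μ) ^ (n + 1 + 1) := by ring

theorem summable_integral_norm_smul_convPow (hf : Integrable f μ)
    (hc : Summable fun n ↦ ‖c n‖ * (∫ x, ‖f x‖ ∂μ) ^ (n + 1)) :
    Summable fun n ↦ ∫ x, ‖c n • convPow μ f n x‖ ∂μ := by
  refine hc.of_nonneg_of_le (fun n ↦ integral_nonneg fun x ↦ norm_nonneg _) fun n ↦ ?_
  simp only [norm_smul, integral_const_mul]
  gcongr
  exact integral_norm_convPow_le hf n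

theorem integrable_convSeries [CompleteSpace A] (hf : Integrable f μ)
    (hc : Summable fun n ↦ ‖c n‖ * (∫ x, ‖f x‖ ∂μ) ^ (n + 1)) : Integrable (convSeries μ c f) μ :=
  integrable_tsum_of_summable_integral_norm (fun n ↦ (integrable_convPow hf n).smul (c n))
    (summable_integral_norm_smul_convPow hf hc)

end ConvolutionPowers

section FourierTransform

variable {V E A : Type*} [NormedAddCommGroup V] [InnerProductSpace ℝ V] [MeasurableSpace V]
  [BorelSpace V] [FiniteDimensional ℝ V]
  [NormedAddCommGroup E] [NormedSpace ℂ E]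
  [NormedRing A] [NormedAlgebra ℂ A]

theorem hasSum_fourier_tsum {ι : Type*} [Countable ι] {F : ι → V → E}
    (hF : ∀ i, Integrable (F i)) (hsum : Summable fun i ↦ ∫ x, ‖F i x‖) (ξ : V) :
    HasSum (fun i ↦ 𝓕 (F i) ξ) (𝓕 (fun x ↦ ∑' i, F i x) ξ) := by
  have h := hasSum_integral_of_summable_integral_norm
    (fun i ↦ (Real.fourierIntegral_convergent_iff ξ).2 (hF i))
    (by simpa only [Circle.norm_smul] using hsum)
  simpa only [Real.fourier_eq, Circle.smul_def, tsum_const_smul''] using h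

theorem ae_eq_of_fourier_eq [CompleteSpace E] {f g : V → E} (hf : Integrable f)
    (hg : Integrable g) (h : 𝓕 f = 𝓕 g) : f =ᵐ[volume] g := by
  have hadjoint (u : V → E) (hu : Integrable u) (χ : SchwartzMap V ℂ) :
      ∫ x, (𝓕 χ : SchwartzMap V ℂ) x • u x = ∫ ξ, χ ξ • 𝓕 u ξ := by
    have hflip := VectorFourier.integral_fourierIntegral_smul_eq_flip (L := innerₗ V)
      (μ := volume) (ν := volume) Real.continuous_fourierChar continuous_inner χ.integrable hu
    rwa [flip_innerₗ] at hflip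
  refine ae_eq_of_integral_contDiff_smul_eq hf.locallyIntegrable hg.locallyIntegrable
    fun χ χ_smooth χ_supp ↦ ?_
  have χ_supp' : HasCompactSupport (Complex.ofRealCLM ∘ χ) := χ_supp.comp_left rfl
  have χ_smooth' : ContDiff ℝ ∞ (Complex.ofRealCLM ∘ χ) := by fun_prop
  let χℂ : SchwartzMap V ℂ := χ_supp'.toSchwartzMap χ_smooth'
  obtain ⟨η, hη⟩ : ∃ η : SchwartzMap V ℂ, 𝓕 η = χℂ :=
    ⟨𝓕⁻ χℂ, FourierTransform.fourier_fourierInv_eq χℂ⟩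
  have hχℂ : ∫ x, χℂ x • f x = ∫ x, χℂ x • g x := by
    rw [← hη, hadjoint f hf, hadjoint g hg, h]
  simpa [χℂ] using hχℂ

theorem fourier_convPow [CompleteSpace A] {f : V → A} (hf : Integrable f) (n : ℕ) (ξ : V) :
    𝓕 (convPow volume f n) ξ = 𝓕 f ξ ^ (n + 1) := by
  induction n with
  | zero => simp [convPow]
  | succ n ih =>
    rw [convPow, Real.fourier_mul_convolution_eq hf (integrable_convPow hf n), ih, ← pow_succ']

theorem hasSum_fourier_convSeries [CompleteSpace A] {c : ℕ → ℂ} {f : V → A} (hf : Integrable f)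
    (hc : Summable fun n ↦ ‖c n‖ * (∫ x, ‖f x‖) ^ (n + 1)) (ξ : V) :
    HasSum (fun n ↦ c n • 𝓕 f ξ ^ (n + 1)) (𝓕 (convSeries volume c f) ξ) := by
  have h := hasSum_fourier_tsum (fun n ↦ (integrable_convPow hf n).smul (c n))
    (summable_integral_norm_smul_convPow hf hc) ξ
  have hterm (n : ℕ) : 𝓕 (c n • convPow volume f n) ξ = c n • 𝓕 f ξ ^ (n + 1) := by
    rw [← fourier_convPow hf]
    exact congrFun (VectorFourier.fourierIntegral_const_smul _ _ _ _ _) ξ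
  simp only [hterm] at h
  exact h

section ExponentialTail

/-- The function with Fourier transform `φ (𝓕 f)`, where
`φ z = (exp z - 1 - z) / z = ∑ n, z ^ (n + 1) / (n + 2)!`. -/
noncomputable def expTail (f : V → A) : V → A :=
  convSeries volume (fun n ↦ ((n + 2)! : ℂ)⁻¹) f

theorem summable_norm_inv_factorial_mul_pow {r : ℝ} (hr : 0 ≤ r) :
    Summable fun n : ℕ ↦ ‖((n + 2)! : ℂ)⁻¹‖ * r ^ (n + 1) := by
  have hexp := (summable_nat_add_iff 1).2 (Real.summable_pow_div_factorial r)
  refine hexp.of_nonneg_of_le (fun n ↦ by positivity) fun n ↦ ?_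
  rw [norm_inv, Complex.norm_natCast, div_eq_inv_mul]
  gcongr
  omega

variable [CompleteSpace A] {f : V → A}

theorem hasSum_exp_sub_one_sub (z : A) :
    HasSum (fun n : ℕ ↦ ((n + 2)! : ℂ)⁻¹ • z ^ (n + 2)) (NormedSpace.exp z - 1 - z) := by
  simpa [Finset.sum_range_succ, sub_sub] using
    (hasSum_nat_add_iff' 2).2 (NormedSpace.exp_series_hasSum_exp' (𝕂 := ℂ) z)

theorem integrable_expTail (hf : Integrable f) : Integrable (expTail f) :=
  integrable_convSeries hf (summable_norm_inv_factorial_mul_pow (by positivity))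

theorem fourier_expTail_mul (hf : Integrable f) (ξ : V) :
    𝓕 (expTail f) ξ * 𝓕 f ξ = NormedSpace.exp (𝓕 f ξ) - 1 - 𝓕 f ξ := by
  have hsum := (hasSum_fourier_convSeries hf
    (summable_norm_inv_factorial_mul_pow (by positivity)) ξ).mul_right (𝓕 f ξ)
  simp only [smul_mul_assoc, ← pow_succ] at hsum
  exact hsum.unique (hasSum_exp_sub_one_sub _)

theorem fourier_expTail_convolution_add (hf : Integrable f) (ξ : V) :
    𝓕 (expTail f ⋆[ContinuousLinearMap.mul ℂ A] f + f) ξ = NormedSpace.exp (𝓕 f ξ) - 1 := by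
  have hadd : 𝓕 (expTail f ⋆[ContinuousLinearMap.mul ℂ A] f + f)
      = 𝓕 (expTail f ⋆[ContinuousLinearMap.mul ℂ A] f) + 𝓕 f :=
    VectorFourier.fourierIntegral_add Real.continuous_fourierChar continuous_inner
      ((integrable_expTail hf).integrable_convolution _ hf) hf
  rw [hadd, Pi.add_apply, Real.fourier_mul_convolution_eq (integrable_expTail hf) hf,
    fourier_expTail_mul hf, sub_add_cancel]

end ExponentialTail

theorem fourier_eq_integral_cexp_smul (f : ℝ → E) (ξ : ℝ) :
    𝓕 f ξ = ∫ x : ℝ, Complex.exp (-Complex.I * x * (2 * Real.pi * ξ : ℝ)) • f x := by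
  rw [Real.fourier_real_eq_integral_exp_smul]
  congr! 4
  push_cast
  ring

end FourierTransform

section RightLimits

theorem tendsto_convolution_nhdsGT_zero {𝕜 E E' F : Type*} [NontriviallyNormedField 𝕜]
    [NormedAddCommGroup E] [NormedSpace 𝕜 E] [NormedAddCommGroup E'] [NormedSpace 𝕜 E']
    [NormedAddCommGroup F] [NormedSpace 𝕜 F] [NormedSpace ℝ F]
    (L : E →L[𝕜] E' →L[𝕜] F) {f : ℝ → E} {g : ℝ → E'} (hf : Integrable f)
    (hf_supp : support f ⊆ Ici 0) (hg_supp : support g ⊆ Ici 0)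
    (hg_bdd : g =O[𝓝[>] 0] fun _ ↦ (1 : ℝ)) :
    Tendsto (f ⋆[L] g) (𝓝[>] 0) (𝓝 0) := by
  rw [support_subset_iff'] at hf_supp hg_supp
  obtain ⟨M, hM⟩ := hg_bdd.bound
  obtain ⟨δ, hδ, hbound⟩ := mem_nhdsGT_iff_exists_Ioo_subset.1 hM
  have hle : ∀ x ∈ Ioo 0 δ, ‖(f ⋆[L] g) x‖ ≤ ∫ t in Ico 0 x, ‖L‖ * ‖f t‖ * M := by
    intro x hx
    rw [convolution_def, ← integral_indicator measurableSet_Ico]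
    refine norm_integral_le_of_norm_le
      (((hf.norm.const_mul ‖L‖).mul_const M).indicator measurableSet_Ico) ?_
    -- At `t = x` the factor `g (x - t) = g 0` need not obey the bound `M`.
    filter_upwards [volume.ae_ne x] with t htx
    by_cases ht : t ∈ Ico 0 x
    · have hgt : ‖g (x - t)‖ ≤ M := by
        simpa using hbound ⟨sub_pos.2 ht.2, (sub_le_self x ht.1).trans_lt hx.2⟩
      rw [indicator_of_mem ht]
      exact (L.le_opNorm₂ _ _).trans (by gcongr)
    · rw [indicator_of_notMem ht]
      rcases lt_or_ge t 0 with ht0 | ht0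
      · simp [hf_supp t ht0.not_ge]
      · have hxt : x < t := htx.symm.lt_of_le (not_lt.1 fun h ↦ ht ⟨ht0, h⟩)
        simp [hg_supp (x - t) (sub_neg.2 hxt).not_ge]
  have hshrink : Tendsto (fun x : ℝ ↦ volume (Ico 0 x)) (𝓝[>] 0) (𝓝 0) := by
    simpa using! (ENNReal.continuous_ofReal.tendsto 0).mono_left nhdsWithin_le_nhds
  have hlim : Tendsto (fun x ↦ ∫ t in Ico 0 x, ‖L‖ * ‖f t‖ * M) (𝓝[>] 0) (𝓝 0) :=
    ((hf.norm.const_mul ‖L‖).mul_const M).tendsto_setIntegral_nhds_zero hshrink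
  exact squeeze_zero_norm' (eventually_of_mem (Ioo_mem_nhdsGT hδ) hle) hlim

theorem tendsto_nhdsWithin_of_ae_eq {X Y : Type*} [TopologicalSpace X] [MeasurableSpace X]
    {μ : Measure X} [μ.IsOpenPosMeasure] [TopologicalSpace Y] [RegularSpace Y] {U : Set X}
    {f g : X → Y} {a : X} {y : Y} (hU : IsOpen U) (hg : ContinuousOn g U) (hfg : f =ᵐ[μ] g)
    (hf : Tendsto f (𝓝[U] a) (𝓝 y)) : Tendsto g (𝓝[U] a) (𝓝 y) := by
  rw [(closed_nhds_basis y).tendsto_right_iff] at hf ⊢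
  rintro C ⟨hCy, hC⟩
  obtain ⟨W, hW, haW, hfW⟩ := mem_nhdsWithin.1 (hf C ⟨hCy, hC⟩)
  have hopen : IsOpen (W ∩ (U ∩ g ⁻¹' Cᶜ)) :=
    hW.inter (hg.isOpen_inter_preimage hU hC.isOpen_compl)
  have hnull : μ (W ∩ (U ∩ g ⁻¹' Cᶜ)) = 0 := by
    refine measure_mono_null ?_ (ae_iff.1 hfg)
    rintro x ⟨hxW, hxU, hxC⟩ heq
    exact hxC (heq ▸ hfW ⟨hxW, hxU⟩)
  filter_upwards [inter_mem_nhdsWithin U (hW.mem_nhds haW)] with x hx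
  by_contra hxC
  exact (hopen.measure_eq_zero_iff μ).1 hnull |>.subset ⟨hx.2, hx.1, hxC⟩

end RightLimits

theorem stmt_18_general {A : Type*} [NormedRing A] [NormedAlgebra ℂ A] [CompleteSpace A]
    {fp fm g ψp : ℝ → A} {L : A}
    (hfp_int : Integrable fp) (hfp_supp : ∀ x : ℝ, x < 0 → fp x = 0)
    (hfm_supp : ∀ x : ℝ, 0 < x → fm x = 0)
    (hg_int : Integrable g) (hg_cont : ContinuousOn g (Ioi 0))
    (hψp : ∀ ξ : ℝ, ψp ξ = ∫ x : ℝ, Complex.exp (-Complex.I * x * ξ) • fp x)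
    (hrep : ∀ ξ : ℝ,
      NormedSpace.exp (ψp ξ) = 1 + ∫ x : ℝ, Complex.exp (-Complex.I * x * ξ) • g x)
    (hL : Tendsto (fun z : ℝ ↦ fp z + fm z) (𝓝[>] 0) (𝓝 L)) :
    Tendsto g (𝓝[>] 0) (𝓝 L) := by
  have hfp_lim : Tendsto fp (𝓝[>] 0) (𝓝 L) :=
    hL.congr' (eventually_mem_nhdsWithin.mono fun z hz ↦ by rw [hfm_supp z hz, add_zero])
  have hsupp : support fp ⊆ AddSubmonoid.nonneg ℝ :=
    support_subset_iff'.2 fun x hx ↦ hfp_supp x (not_le.1 hx)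
  have hfourier : 𝓕 (expTail fp ⋆[ContinuousLinearMap.mul ℂ A] fp + fp) = 𝓕 g := by
    ext ξ
    rw [fourier_expTail_convolution_add hfp_int, fourier_eq_integral_cexp_smul fp, ← hψp, hrep,
      ← fourier_eq_integral_cexp_smul, add_sub_cancel_left]
  have hg_ae : expTail fp ⋆[ContinuousLinearMap.mul ℂ A] fp + fp =ᵐ[volume] g :=
    ae_eq_of_fourier_eq
      (((integrable_expTail hfp_int).integrable_convolution _ hfp_int).add hfp_int) hg_int hfourier
  have htail : Tendsto (expTail fp ⋆[ContinuousLinearMap.mul ℂ A] fp) (𝓝[>] 0) (𝓝 0) :=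
    tendsto_convolution_nhdsGT_zero _ (integrable_expTail hfp_int)
      (support_convSeries_subset (S := (AddSubmonoid.nonneg ℝ).toAddSubsemigroup) hsupp) hsupp
      (hfp_lim.isBigO_one ℝ)
  refine tendsto_nhdsWithin_of_ae_eq isOpen_Ioi hg_cont hg_ae ?_
  simpa only [zero_add] using! htail.add hfp_lim

/-- Formula (6.7): with `q₀ = e^ψ`, `ψ = F(f₊ + f₋)` where `f₊` is supported in `[0,∞)`
and `f₋` in `(-∞,0]`, `ψ₊ = F f₊`, and `q₀⁺ = e^{ψ₊}` with `h⁺q₀⁺ = q₀⁺ - 1 = F g`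
(`g` supported in `[0,∞)`), the plus-integral `(1/2π)∫⁺ h⁺q₀⁺ dξ_n`, i.e. the right
limit of `g` at `0`, equals `lim_{z→0+} [F⁻¹ψ](z) = lim_{z→0+} (f₊ + f₋)(z)`. -/
theorem stmt_18 (fp fm g : ℝ → ℂ) (L : ℂ)
    (hfp_int : Integrable fp) (hfp_supp : ∀ x : ℝ, x < 0 → fp x = 0)
    (hfp_cont : ContinuousOn fp (Set.Ioi 0))
    (hfm_supp : ∀ x : ℝ, 0 < x → fm x = 0)
    (hg_int : Integrable g) (hg_supp : ∀ x : ℝ, x < 0 → g x = 0)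
    (hg_cont : ContinuousOn g (Set.Ioi 0))
    (ψp : ℝ → ℂ)
    (hψp : ∀ ξ : ℝ, ψp ξ = ∫ x : ℝ, Complex.exp (-Complex.I * x * ξ) * fp x)
    (hrep : ∀ ξ : ℝ, Complex.exp (ψp ξ) = 1 + ∫ x : ℝ, Complex.exp (-Complex.I * x * ξ) * g x)
    (hL : Filter.Tendsto (fun z : ℝ => fp z + fm z) (nhdsWithin 0 (Set.Ioi 0)) (nhds L)) :
    Filter.Tendsto g (nhdsWithin 0 (Set.Ioi 0)) (nhds L) := by
  exact stmt_18_general hfp_int hfp_supp hfm_supp hg_int hg_cont hψp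
    (fun ξ ↦ (congrFun Complex.exp_eq_exp_ℂ _).symm.trans (hrep ξ)) hL
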